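/- (Support of the solution, divergent form) Let p ∈ (1,∞), l ∈ (0,p), n ∈ [1,∞) real, R ∈ (0,∞]. Let φ : ℝ → ℝ be continuous and odd with τφ(τ) > 0 for a.e. τ. Let a be locally absolutely continuous on (0,R) with a > 0 a.e., let d_a(τ) := (n−1)a(τ)/τ + (1/p)a'(τ) satisfy d_a > 0 a.e. with d_a and d_a^{−1/(p−1)} locally integrable on (0,R). Let h : (0,R) × ℝ² → ℝ be a Carathéodory function such that for some θ ∈ (0,1] and a non-negative measurable q locally integrable on (0,R): h(τ,λ₀,λ₁)λ₁ ≤ θ q(τ)|λ₀|^l |λ₁|^{p−l} + (1−θ) d_a(τ)|λ₁|^p for all λ₀, λ₁ ∈ ℝ and a.e. τ. Assume K(s,r,q,d_a) < ∞ for every 0 < s < r < R. Let u and Φ_p(u') be locally absolutely continuous on (0,R) and suppose u solves the divergent ODE: (a(τ)Φ_p(u'(τ)))' + (n−1)(a(τ)/τ)Φ_p(u'(τ)) − h(τ,u(τ),u'(τ)) + φ(u(τ)) = 0 for a.e. τ ∈ (0,R). If u(s) = 0 and u'(s) = 0 for some s ∈ (0,R), then u ≡ 0 on [s,R). -/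

import Mathlib

open MeasureTheory Set Filter
open scoped ENNReal

/-- `Φ_p(λ) = |λ|^{p-2} λ` for `λ ≠ 0`, and `Φ_p(0) = 0`. -/
noncomputable def PhiP (p x : ℝ) : ℝ := if x = 0 then 0 else |x| ^ (p - 2) * x

/-- `u` is absolutely continuous on `[s,t]` with a.e. derivative `u'`:
`u'` is integrable on `[s,t]` and the fundamental theorem of calculus holds. -/
def ACOn (u u' : ℝ → ℝ) (s t : ℝ) : Prop :=
  MeasureTheory.IntegrableOn u' (Set.Icc s t) ∧
    ∀ x ∈ Set.Icc s t, u x = u s + ∫ σ in s..x, u' σ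

/-- The Beesack–Das constant
`K(s,·,q,v) = ((p-l)/p)^{(p-l)/p} [∫_S q(t)^{p/l} v(t)^{-(p-l)/l}
  (∫_s^t v(σ)^{-1/(p-1)} dσ)^{p-1} dt]^{l/p}`, over a set `S`. -/
noncomputable def BDK (p l : ℝ) (q v : ℝ → ℝ) (s : ℝ) (S : Set ℝ) : ℝ≥0∞ :=
  ENNReal.ofReal (((p - l) / p) ^ ((p - l) / p)) *
    (∫⁻ t in S,
      ENNReal.ofReal (q t) ^ (p / l) * ENNReal.ofReal (v t) ^ (-((p - l) / l)) *
        (∫⁻ σ in Set.Ioc s t, ENNReal.ofReal (v σ) ^ (-(1 / (p - 1)))) ^ (p - 1)) ^ (l / p)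

/-- `δ_a(τ) = (n-1) a(τ)/τ - (1 - 1/p) a'(τ)`. -/
noncomputable def deltaA (n p : ℝ) (a a' : ℝ → ℝ) : ℝ → ℝ :=
  fun τ => (n - 1) * a τ / τ - (1 - 1 / p) * a' τ

/-- `d_a(τ) = (n-1) a(τ)/τ + (1/p) a'(τ)`. -/
noncomputable def dA (n p : ℝ) (a a' : ℝ → ℝ) : ℝ → ℝ :=
  fun τ => (n - 1) * a τ / τ + (1 / p) * a' τ


open scoped Topology

lemma ac_congr {f g : ℝ → ℝ} {s t : ℝ} (hfg : ∀ x ∈ uIcc s t, f x = g x)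
    (hg : AbsolutelyContinuousOnInterval g s t) : AbsolutelyContinuousOnInterval f s t := by
  rw [absolutelyContinuousOnInterval_iff] at hg ⊢
  intro ε hε
  obtain ⟨δ, hδ, H⟩ := hg ε hε
  refine ⟨δ, hδ, fun E hE hlt => ?_⟩
  have := H E hE hlt
  refine lt_of_eq_of_lt (Finset.sum_congr rfl fun i hi => ?_) this
  rw [hfg _ (hE.1 i hi).1, hfg _ (hE.1 i hi).2]

lemma ac_comp {f u : ℝ → ℝ} {s t : ℝ} (hf : ContDiff ℝ 1 f)
    (hu : AbsolutelyContinuousOnInterval u s t) :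
    AbsolutelyContinuousOnInterval (fun x => f (u x)) s t := by
  obtain ⟨C, hC⟩ := hu.exists_bound
  obtain ⟨K, hK⟩ := (hf.contDiffOn (s := Icc (-C) C)).exists_lipschitzOnWith (by decide)
    (convex_Icc _ _) isCompact_Icc
  have hmem : ∀ x ∈ uIcc s t, u x ∈ Icc (-C) C := fun x hx => by
    have := hC x hx
    rw [Real.norm_eq_abs] at this
    exact abs_le.1 this
  rw [absolutelyContinuousOnInterval_iff] at hu ⊢
  intro ε hε
  obtain ⟨δ, hδ, H⟩ := hu (ε / (K + 1)) (by positivity)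
  refine ⟨δ, hδ, fun E hE hlt => ?_⟩
  have h1 := H E hE hlt
  calc _ ≤ ∑ i ∈ Finset.range E.1, (K + 1 : ℝ) * dist (u (E.2 i).1) (u (E.2 i).2) := by
        apply Finset.sum_le_sum
        intro i hi
        have := hK.dist_le_mul _ (hmem _ (hE.1 i hi).1) _ (hmem _ (hE.1 i hi).2)
        refine this.trans ?_
        gcongr
        simp
    _ = (K + 1) * ∑ i ∈ Finset.range E.1, dist (u (E.2 i).1) (u (E.2 i).2) := by
        rw [Finset.mul_sum]
    _ < (K + 1) * (ε / (K + 1)) := by gcongr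
    _ = ε := by field

lemma ACOn.ii {u u' : ℝ → ℝ} {s t : ℝ} (hst : s ≤ t) (h : ACOn u u' s t) :
    IntervalIntegrable u' volume s t :=
  (intervalIntegrable_iff_integrableOn_Icc_of_le hst).2 h.1

lemma ACOn.ac {u u' : ℝ → ℝ} {s t : ℝ} (hst : s ≤ t) (h : ACOn u u' s t) :
    AbsolutelyContinuousOnInterval u s t := by
  have h1 := (h.ii hst).absolutelyContinuousOnInterval_intervalIntegral (c := s) (by simp)
  have h2 : AbsolutelyContinuousOnInterval (fun _ : ℝ => u s) s t :=
    ContDiffOn.absolutelyContinuousOnInterval contDiffOn_const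
  refine ac_congr (fun x hx => ?_) (h2.add h1)
  rw [uIcc_of_le hst] at hx
  exact h.2 x hx

lemma ACOn.ae_deriv {u u' : ℝ → ℝ} {s t : ℝ} (hst : s ≤ t) (h : ACOn u u' s t) :
    ∀ᵐ x, x ∈ Icc s t → HasDerivAt u (u' x) x := by
  have h1 : ∀ᵐ x : ℝ, x ≠ s := by simp [ae_iff, measure_singleton]
  have h2 : ∀ᵐ x : ℝ, x ≠ t := by simp [ae_iff, measure_singleton]
  filter_upwards [(h.ii hst).ae_hasDerivAt_integral, h1, h2] with x hx hxs hxt hm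
  rw [uIcc_of_le hst] at hx
  have := (hx hm s (by simp [hst])).const_add (u s)
  refine this.congr_of_eventuallyEq ?_
  filter_upwards [Ioo_mem_nhds (lt_of_le_of_ne hm.1 hxs.symm) (lt_of_le_of_ne hm.2 hxt)] with y hy
  exact h.2 y ⟨hy.1.le, hy.2.le⟩

/-! ### Facts on `PhiP` -/

lemma PhiP_abs {p x : ℝ} (hp : 1 < p) : |PhiP p x| = |x| ^ (p - 1) := by
  unfold PhiP
  split_ifs with h
  · rw [h, abs_zero, Real.zero_rpow (by linarith)]
  · have : 0 < |x| := abs_pos.2 h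
    rw [abs_mul, abs_of_nonneg (by positivity : 0 ≤ |x| ^ (p - 2))]
    nth_rewrite 2 [← Real.rpow_one |x|]
    rw [← Real.rpow_add this]
    congr 1; ring

lemma PhiP_mul_self {p x : ℝ} (hp : 1 < p) : PhiP p x * x = |x| ^ p := by
  unfold PhiP
  split_ifs with h
  · rw [h, abs_zero, Real.zero_rpow (by linarith)]; simp
  · have : 0 < |x| := abs_pos.2 h
    rw [mul_assoc, ← abs_mul_abs_self x, ← mul_assoc]
    nth_rewrite 2 [← Real.rpow_one |x|]
    nth_rewrite 3 [← Real.rpow_one |x|]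
    rw [← Real.rpow_add this, ← Real.rpow_add this]
    congr 1; ring

lemma PhiP_rpow {p x : ℝ} (hp : 1 < p) : |PhiP p x| ^ (p / (p - 1)) = |x| ^ p := by
  have : p - 1 ≠ 0 := by linarith
  rw [PhiP_abs hp, ← Real.rpow_mul (abs_nonneg _)]
  congr 1; field_simp

lemma conj_gt {p : ℝ} (hp : 1 < p) : 1 < p / (p - 1) := by
  rw [lt_div_iff₀ (by linarith)]; linarith

lemma PhiP_deriv {p x : ℝ} (hp : 1 < p) :
    HasDerivAt (fun y : ℝ => |y| ^ (p / (p - 1))) (p / (p - 1) * x) (PhiP p x) := by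
  have h := hasDerivAt_abs_rpow (PhiP p x) (conj_gt hp)
  convert h using 1
  have h1 : p - 1 ≠ 0 := by linarith
  rw [PhiP_abs hp, mul_assoc]
  congr 1
  by_cases hx : x = 0
  · simp [hx, PhiP]
  have hx' : 0 < |x| := abs_pos.2 hx
  rw [PhiP, if_neg hx, ← mul_assoc, ← Real.rpow_mul hx'.le, ← Real.rpow_add hx']
  rw [show (p - 1) * (p / (p - 1) - 2) + (p - 2) = 0 by field_simp; ring]
  simp

lemma contDiff_F {p : ℝ} (hp : 1 < p) : ContDiff ℝ 1 (fun y : ℝ => |y| ^ (p / (p - 1))) := by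
  have := contDiff_norm_rpow (E := ℝ) (conj_gt hp)
  simpa only [Real.norm_eq_abs] using this

lemma cont_of_PhiP {p : ℝ} (hp : 1 < p) {f : ℝ → ℝ} {S : Set ℝ}
    (h : ContinuousOn (fun τ => PhiP p (f τ)) S) : ContinuousOn f S := by
  have h1 := (contDiff_F hp).continuous_deriv_one
  have h2 := (h1.comp_continuousOn h).div_const (p / (p - 1))
  refine h2.congr fun x _ => ?_
  have : p / (p - 1) ≠ 0 := by have := conj_gt hp; linarith
  simp only [Function.comp]
  rw [(PhiP_deriv hp).deriv, mul_div_cancel_left₀ _ this]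

/-! ### Potential -/

lemma int_pos_ae {f : ℝ → ℝ} (hc : Continuous f) {a b : ℝ} (hab : a < b)
    (hf : ∀ᵐ x, x ∈ Ioc a b → 0 < f x) : 0 < ∫ x in a..b, f x := by
  rw [intervalIntegral.integral_pos_iff_support_of_nonneg_ae' _ (hc.intervalIntegrable _ _)]
  · refine ⟨hab, ?_⟩
    have : volume (Function.support f ∩ Ioc a b) = volume (Ioc a b) := by
      refine measure_congr ?_
      filter_upwards [hf] with x hx
      apply propext
      constructor
      · exact fun h => h.2
      · exact fun h => ⟨(hx h).ne', h⟩
    rw [this, Real.volume_Ioc]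
    simpa using hab
  · rw [uIoc_of_le hab.le]
    refine (ae_restrict_iff' measurableSet_Ioc).2 ?_
    filter_upwards [hf] with x hx h using (hx h).le

lemma Psi_pos {φ : ℝ → ℝ} (hc : Continuous φ)
    (hs : ∀ᵐ τ ∂(volume : Measure ℝ), 0 < τ * φ τ) {x : ℝ} (hx : x ≠ 0) :
    0 < ∫ t in (0:ℝ)..x, φ t := by
  rcases lt_or_gt_of_ne hx with h | h
  · rw [intervalIntegral.integral_symm, ← intervalIntegral.integral_neg]
    refine int_pos_ae (f := fun t => -φ t) hc.neg h ?_
    filter_upwards [hs] with t ht hm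
    by_contra hcon
    have := mul_nonpos_of_nonpos_of_nonneg hm.2 (by linarith : 0 ≤ φ t)
    linarith
  · refine int_pos_ae hc h ?_
    filter_upwards [hs] with t ht hm
    exact (pos_iff_pos_of_mul_pos ht).1 hm.1

lemma Psi_contDiff {φ : ℝ → ℝ} (hc : Continuous φ) (x : ℝ) :
    HasDerivAt (fun x => ∫ t in (0:ℝ)..x, φ t) (φ x) x :=
  intervalIntegral.integral_hasDerivAt_right (hc.intervalIntegrable _ _)
    (hc.stronglyMeasurableAtFilter _ _) hc.continuousAt

lemma Psi_c1 {φ : ℝ → ℝ} (hc : Continuous φ) :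
    ContDiff ℝ 1 (fun x => ∫ t in (0:ℝ)..x, φ t) := by
  rw [contDiff_one_iff_deriv]
  refine ⟨fun x => (Psi_contDiff hc x).differentiableAt, ?_⟩
  convert hc using 1
  exact funext fun x => (Psi_contDiff hc x).deriv

/-! ### The Beesack-Das type inequality -/

lemma beesack {p l s r : ℝ} (hp : 1 < p) (hl0 : 0 < l) (hlp : l < p) {v q g y : ℝ → ℝ≥0∞}
    (hv : AEMeasurable v (volume.restrict (Ioc s r)))
    (hq : AEMeasurable q (volume.restrict (Ioc s r)))
    (hg : AEMeasurable g (volume.restrict (Ioc s r)))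
    (hv0 : ∀ᵐ t ∂(volume.restrict (Ioc s r)), v t ≠ 0 ∧ v t ≠ ⊤)
    (hy : ∀ t ∈ Ioc s r, y t ≤ ∫⁻ σ in Ioc s t, g σ) :
    ∫⁻ t in Ioc s r, q t * y t ^ l * g t ^ (p - l) ≤
      (∫⁻ t in Ioc s r, q t ^ (p / l) * v t ^ (-((p - l) / l)) *
        (∫⁻ σ in Ioc s t, v σ ^ (-(1 / (p - 1)))) ^ (p - 1)) ^ (l / p) *
      ∫⁻ t in Ioc s r, v t * g t ^ p := by
  have hp1 : p - 1 ≠ 0 := by linarith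
  have hp0 : p ≠ 0 := by linarith
  have hpl : p - l ≠ 0 := by linarith
  have hl : l ≠ 0 := by linarith
  set G := ∫⁻ t in Ioc s r, v t * g t ^ p with hG
  set W : ℝ → ℝ≥0∞ := fun t => ∫⁻ σ in Ioc s t, v σ ^ (-(1 / (p - 1))) with hW
  have hWm : Measurable W := by
    refine Monotone.measurable fun x y hxy => ?_
    exact lintegral_mono_set (Ioc_subset_Ioc_right hxy)
  have step1 : ∀ t ∈ Ioc s r, y t ≤ W t ^ ((p - 1) / p) * G ^ (1 / p) := by
    intro t ht
    have hle : volume.restrict (Ioc s t) ≤ volume.restrict (Ioc s r) :=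
      Measure.restrict_mono (Ioc_subset_Ioc_right ht.2) le_rfl
    have hv0' : ∀ᵐ σ ∂(volume.restrict (Ioc s t)), v σ ≠ 0 ∧ v σ ≠ ⊤ := ae_mono hle hv0
    have hvt := hv.mono_measure hle
    have hgt := hg.mono_measure hle
    have hc : (p / (p - 1)).HolderConjugate p := by
      rw [Real.holderConjugate_iff]
      refine ⟨conj_gt hp, ?_⟩
      field_simp; ring
    have H := ENNReal.lintegral_mul_le_Lp_mul_Lq (volume.restrict (Ioc s t)) hc
      (f := fun σ => v σ ^ (-(1 / p))) (g := fun σ => v σ ^ (1 / p) * g σ)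
      (hvt.pow_const _) ((hvt.pow_const _).mul hgt)
    have e1 : ∫⁻ σ in Ioc s t, g σ =
        ∫⁻ σ in Ioc s t, ((fun σ => v σ ^ (-(1 / p))) * (fun σ => v σ ^ (1 / p) * g σ)) σ := by
      refine lintegral_congr_ae ?_
      filter_upwards [hv0'] with σ hσ
      simp only [Pi.mul_apply]
      rw [← mul_assoc, ← ENNReal.rpow_add _ _ hσ.1 hσ.2]
      simp
    have e2 : ∫⁻ σ in Ioc s t, (v σ ^ (-(1 / p))) ^ (p / (p - 1)) = W t := by
      simp only [hW]
      refine lintegral_congr fun σ => ?_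
      rw [← ENNReal.rpow_mul]
      congr 1; field_simp
    have e3 : ∫⁻ σ in Ioc s t, (v σ ^ (1 / p) * g σ) ^ p ≤ G := by
      rw [hG]
      refine le_trans (le_of_eq ?_) (lintegral_mono' hle le_rfl)
      refine lintegral_congr fun σ => ?_
      rw [ENNReal.mul_rpow_of_nonneg _ _ (by linarith), ← ENNReal.rpow_mul]
      rw [one_div_mul_cancel hp0, ENNReal.rpow_one]
    refine (hy t ht).trans ?_
    rw [e1]
    refine H.trans ?_
    rw [e2, one_div_div]
    gcongr
  have hb : AEMeasurable (fun t => q t * W t ^ ((p - 1) * l / p) * v t ^ (-((p - l) / p)))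
      (volume.restrict (Ioc s r)) :=
    (hq.mul (hWm.pow_const _).aemeasurable).mul (hv.pow_const _)
  have hd : AEMeasurable (fun t => v t ^ ((p - l) / p) * g t ^ (p - l))
      (volume.restrict (Ioc s r)) :=
    (hv.pow_const _).mul (hg.pow_const _)
  have hc : (p / l).HolderConjugate (p / (p - l)) := by
    rw [Real.holderConjugate_iff]
    refine ⟨by rw [lt_div_iff₀ hl0]; linarith, ?_⟩
    field_simp; ring
  have H := ENNReal.lintegral_mul_le_Lp_mul_Lq (volume.restrict (Ioc s r)) hc hb hd
  have k1 : ∫⁻ t in Ioc s r, (q t * W t ^ ((p - 1) * l / p) * v t ^ (-((p - l) / p))) ^ (p / l) =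
      ∫⁻ t in Ioc s r, q t ^ (p / l) * v t ^ (-((p - l) / l)) * W t ^ (p - 1) := by
    refine lintegral_congr fun t => ?_
    have : 0 ≤ p / l := by positivity
    rw [ENNReal.mul_rpow_of_nonneg _ _ this, ENNReal.mul_rpow_of_nonneg _ _ this,
      ← ENNReal.rpow_mul, ← ENNReal.rpow_mul, mul_right_comm]
    congr 2
    · congr 1; field_simp
    · field_simp
  have k2 : ∫⁻ t in Ioc s r, (v t ^ ((p - l) / p) * g t ^ (p - l)) ^ (p / (p - l)) = G := by
    refine lintegral_congr fun t => ?_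
    have : 0 ≤ p / (p - l) := div_nonneg (by linarith) (by linarith)
    rw [ENNReal.mul_rpow_of_nonneg _ _ this, ← ENNReal.rpow_mul, ← ENNReal.rpow_mul]
    rw [show (p - l) / p * (p / (p - l)) = 1 by field_simp,
      show (p - l) * (p / (p - l)) = p by field_simp, ENNReal.rpow_one]
  rw [k1, k2, one_div_div, one_div_div] at H
  calc ∫⁻ t in Ioc s r, q t * y t ^ l * g t ^ (p - l)
      ≤ ∫⁻ t in Ioc s r, G ^ (l / p) *
        ((fun t => q t * W t ^ ((p - 1) * l / p) * v t ^ (-((p - l) / p))) *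
          (fun t => v t ^ ((p - l) / p) * g t ^ (p - l))) t := by
        refine lintegral_mono_ae ?_
        filter_upwards [hv0, ae_restrict_mem measurableSet_Ioc] with t ht htm
        have h1 : y t ^ l ≤ W t ^ ((p - 1) * l / p) * G ^ (l / p) := by
          refine (ENNReal.rpow_le_rpow (step1 t htm) hl0.le).trans (le_of_eq ?_)
          rw [ENNReal.mul_rpow_of_nonneg _ _ hl0.le, ← ENNReal.rpow_mul, ← ENNReal.rpow_mul]
          congr 2 <;> ring
        have h2 : v t ^ (-((p - l) / p)) * v t ^ ((p - l) / p) = 1 := by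
          rw [← ENNReal.rpow_add _ _ ht.1 ht.2]; simp
        calc q t * y t ^ l * g t ^ (p - l)
            ≤ q t * (W t ^ ((p - 1) * l / p) * G ^ (l / p)) * g t ^ (p - l) := by gcongr
          _ = q t * (W t ^ ((p - 1) * l / p) * G ^ (l / p)) * g t ^ (p - l) *
              (v t ^ (-((p - l) / p)) * v t ^ ((p - l) / p)) := by rw [h2, mul_one]
          _ = _ := by simp only [Pi.mul_apply]; ring
    _ = G ^ (l / p) * ∫⁻ t in Ioc s r, 
        ((fun t => q t * W t ^ ((p - 1) * l / p) * v t ^ (-((p - l) / p))) *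
          (fun t => v t ^ ((p - l) / p) * g t ^ (p - l))) t :=
        lintegral_const_mul'' _ (hb.mul hd)
    _ ≤ G ^ (l / p) * ((∫⁻ t in Ioc s r, q t ^ (p / l) * v t ^ (-((p - l) / l)) *
          W t ^ (p - 1)) ^ (l / p) * G ^ ((p - l) / p)) := by gcongr
    _ = (∫⁻ t in Ioc s r, q t ^ (p / l) * v t ^ (-((p - l) / l)) *
          W t ^ (p - 1)) ^ (l / p) * (G ^ (l / p) * G ^ ((p - l) / p)) := by ring
    _ = _ := by
        rw [← ENNReal.rpow_add_of_nonneg _ _ (by positivity)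
          (div_nonneg (by linarith) (by linarith))]
        rw [show l / p + (p - l) / p = 1 by field_simp; ring, ENNReal.rpow_one]

lemma local_step {p l θ s r : ℝ} (hp : 1 < p) (hl0 : 0 < l) (hlp : l < p) (hθ : 0 < θ)
    (hsr : s < r) {E u u' q v : ℝ → ℝ}
    (hE : AbsolutelyContinuousOnInterval E s r)
    (hEd : ∀ᵐ x, x ∈ Icc s r →
      deriv E x ≤ θ * (q x * (|u x| ^ l * |u' x| ^ (p - l)) - v x * |u' x| ^ p))
    (hu : ACOn u u' s r) (hus : u s = 0) (hu'c : ContinuousOn u' (Icc s r))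
    (hq : IntegrableOn q (Icc s r)) (hv : IntegrableOn v (Icc s r))
    (hq0 : ∀ᵐ x, x ∈ Icc s r → 0 ≤ q x) (hv0 : ∀ᵐ x, x ∈ Icc s r → 0 < v x)
    (hJ : ∫⁻ t in Ioc s r, ENNReal.ofReal (q t) ^ (p / l) *
        ENNReal.ofReal (v t) ^ (-((p - l) / l)) *
        (∫⁻ σ in Ioc s t, ENNReal.ofReal (v σ) ^ (-(1 / (p - 1)))) ^ (p - 1) ≤ 1) :
    E r ≤ E s := by
  have huc : ContinuousOn u (Icc s r) := by
    have := (hu.ac hsr.le).continuousOn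
    rwa [uIcc_of_le hsr.le] at this
  have hsub : Ioc s r ⊆ Icc s r := Ioc_subset_Icc_self
  have hle : volume.restrict (Ioc s r) ≤ volume.restrict (Icc s r) :=
    Measure.restrict_mono hsub le_rfl
  have hA : IntegrableOn (fun x => q x * (|u x| ^ l * |u' x| ^ (p - l))) (Icc s r) := by
    refine hq.mul_continuousOn ?_ isCompact_Icc
    exact (huc.abs.rpow_const fun x _ => Or.inr hl0.le).mul
      (hu'c.abs.rpow_const fun x _ => Or.inr (by linarith))
  have hB : IntegrableOn (fun x => v x * |u' x| ^ p) (Icc s r) := by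
    refine hv.mul_continuousOn ?_ isCompact_Icc
    exact hu'c.abs.rpow_const fun x _ => Or.inr (by linarith)
  have hq0' : ∀ᵐ x ∂(volume.restrict (Ioc s r)), 0 ≤ q x :=
    (ae_restrict_iff' measurableSet_Ioc).2 (hq0.mono fun x hx h => hx (hsub h))
  have hv0' : ∀ᵐ x ∂(volume.restrict (Ioc s r)), 0 < v x :=
    (ae_restrict_iff' measurableSet_Ioc).2 (hv0.mono fun x hx h => hx (hsub h))
  have key : ∫ x in Ioc s r, q x * (|u x| ^ l * |u' x| ^ (p - l)) ≤
      ∫ x in Ioc s r, v x * |u' x| ^ p := by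
    have hBnn : 0 ≤ᵐ[volume.restrict (Ioc s r)] fun x => v x * |u' x| ^ p := by
      filter_upwards [hv0'] with x hx
      have := hx.le
      simp only [Pi.zero_apply]
      positivity
    have hAnn : 0 ≤ᵐ[volume.restrict (Ioc s r)]
        fun x => q x * (|u x| ^ l * |u' x| ^ (p - l)) := by
      filter_upwards [hq0'] with x hx
      simp only [Pi.zero_apply]
      positivity
    rw [← ENNReal.ofReal_le_ofReal_iff (integral_nonneg_of_ae hBnn),
      ofReal_integral_eq_lintegral_ofReal (hA.mono_set hsub) hAnn,
      ofReal_integral_eq_lintegral_ofReal (hB.mono_set hsub) hBnn]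
    have hg : AEMeasurable (fun t => ENNReal.ofReal |u' t|) (volume.restrict (Ioc s r)) :=
      ((hu'c.mono hsub).aemeasurable measurableSet_Ioc).norm.ennreal_ofReal
    have hyb : ∀ t ∈ Ioc s r, ENNReal.ofReal |u t| ≤ ∫⁻ σ in Ioc s t, ENNReal.ofReal |u' σ| := by
      intro t ht
      rw [hu.2 t (hsub ht), hus, zero_add, intervalIntegral.integral_of_le ht.1.le]
      simp only [← Real.enorm_eq_ofReal_abs]
      exact enorm_integral_le_lintegral_enorm _
    have H := beesack (s := s) (r := r) hp hl0 hlp (v := fun t => ENNReal.ofReal (v t))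
      (q := fun t => ENNReal.ofReal (q t)) (g := fun t => ENNReal.ofReal |u' t|)
      (y := fun t => ENNReal.ofReal |u t|)
      (hv.mono_set hsub).aemeasurable.ennreal_ofReal
      (hq.mono_set hsub).aemeasurable.ennreal_ofReal hg
      (by filter_upwards [hv0'] with t ht; simp [ht]) hyb
    calc _ = ∫⁻ t in Ioc s r, ENNReal.ofReal (q t) * ENNReal.ofReal |u t| ^ l *
              ENNReal.ofReal |u' t| ^ (p - l) := by
            refine lintegral_congr_ae ?_
            filter_upwards [hq0'] with t ht
            rw [ENNReal.ofReal_mul ht, ENNReal.ofReal_mul (by positivity),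
              ENNReal.ofReal_rpow_of_nonneg (abs_nonneg _) hl0.le,
              ENNReal.ofReal_rpow_of_nonneg (abs_nonneg _) (by linarith), mul_assoc]
      _ ≤ _ := H
      _ ≤ 1 * ∫⁻ t in Ioc s r, ENNReal.ofReal (v t) * ENNReal.ofReal |u' t| ^ p := by
            gcongr
            exact ENNReal.rpow_le_one hJ (by positivity)
      _ = _ := by
            rw [one_mul]
            refine lintegral_congr_ae ?_
            filter_upwards [hv0'] with t ht
            rw [ENNReal.ofReal_mul ht.le,
              ENNReal.ofReal_rpow_of_nonneg (abs_nonneg _) (by linarith)]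
  have h1 := hE.integral_deriv_eq_sub
  have h2 : ∫ x in s..r, deriv E x ≤
      ∫ x in s..r, θ * (q x * (|u x| ^ l * |u' x| ^ (p - l)) - v x * |u' x| ^ p) := by
    refine intervalIntegral.integral_mono_ae_restrict hsr.le hE.intervalIntegrable_deriv ?_ ?_
    · exact (intervalIntegrable_iff_integrableOn_Icc_of_le hsr.le).2 ((hA.sub hB).const_mul θ)
    · exact (ae_restrict_iff' measurableSet_Icc).2 hEd
  rw [intervalIntegral.integral_of_le hsr.le, intervalIntegral.integral_of_le hsr.le,
    integral_const_mul, integral_sub (hA.mono_set hsub) (hB.mono_set hsub)] at h2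
  rw [intervalIntegral.integral_of_le hsr.le] at h1
  have h3 := mul_nonpos_of_nonneg_of_nonpos hθ.le (sub_nonpos.2 key)
  linarith

/-- The energy. -/
noncomputable def EnergyD (p : ℝ) (φ a u u' : ℝ → ℝ) (τ : ℝ) : ℝ :=
  (p - 1) / p * (a τ * |PhiP p (u' τ)| ^ (p / (p - 1))) + ∫ t in (0:ℝ)..(u τ), φ t

lemma energy_ac {p s r : ℝ} (hp : 1 < p) (hsr : s ≤ r) {φ a a' u u' v' : ℝ → ℝ}
    (hφ : Continuous φ) (ha : ACOn a a' s r) (hu : ACOn u u' s r)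
    (hv : ACOn (fun τ => PhiP p (u' τ)) v' s r) :
    AbsolutelyContinuousOnInterval (EnergyD p φ a u u') s r := by
  have h1 := ac_comp (contDiff_F hp) (hv.ac hsr)
  have h2 := ((ha.ac hsr).mul h1).const_mul ((p - 1) / p)
  have h3 := h2.add (ac_comp (Psi_c1 hφ) (hu.ac hsr))
  refine ac_congr (fun x _ => ?_) h3
  simp only [EnergyD, Pi.add_apply, Pi.mul_apply]

lemma energy_deriv {p l n θ s r : ℝ} (hp : 1 < p) (hsr : s ≤ r)
    {φ a a' u u' v' w' q : ℝ → ℝ} {h : ℝ → ℝ → ℝ → ℝ}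
    (hφ : Continuous φ) (ha : ACOn a a' s r) (hu : ACOn u u' s r)
    (hv : ACOn (fun τ => PhiP p (u' τ)) v' s r)
    (hw : ACOn (fun τ => a τ * PhiP p (u' τ)) w' s r)
    (hgrowth : ∀ᵐ τ, τ ∈ Icc s r →
      ∀ lam₀ lam₁ : ℝ, h τ lam₀ lam₁ * lam₁ ≤
        θ * q τ * |lam₀| ^ l * |lam₁| ^ (p - l) + (1 - θ) * dA n p a a' τ * |lam₁| ^ p)
    (hODE : ∀ᵐ τ, τ ∈ Icc s r →
      w' τ + (n - 1) * (a τ / τ) * PhiP p (u' τ)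
        - h τ (u τ) (u' τ) + φ (u τ) = 0) :
    ∀ᵐ x, x ∈ Icc s r → deriv (EnergyD p φ a u u') x ≤
      θ * (q x * (|u x| ^ l * |u' x| ^ (p - l)) - dA n p a a' x * |u' x| ^ p) := by
  filter_upwards [ha.ae_deriv hsr, hu.ae_deriv hsr, hv.ae_deriv hsr, hw.ae_deriv hsr,
    hgrowth, hODE] with x h1 h2 h3 h4 h5 h6 hx
  have h1 := h1 hx
  have h2 := h2 hx
  have h3 := h3 hx
  have h4 := h4 hx
  have h5 := h5 hx (u x) (u' x)
  have h6 := h6 hx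
  have hw' : w' x = a' x * PhiP p (u' x) + a x * v' x := h4.unique (h1.mul h3)
  have hF := (PhiP_deriv (x := u' x) hp).comp x h3
  have hd : HasDerivAt (EnergyD p φ a u u') ((p - 1) / p *
      (a' x * |PhiP p (u' x)| ^ (p / (p - 1)) + a x * (p / (p - 1) * u' x * v' x)) +
      φ (u x) * u' x) x :=
    ((h1.mul hF).const_mul _).add ((Psi_contDiff hφ (u x)).comp x h2)
  rw [hd.deriv, PhiP_rpow hp]
  have hX := PhiP_mul_self (x := u' x) hp
  have hp1 : p - 1 ≠ 0 := by linarith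
  have hp0 : p ≠ 0 := by linarith
  have e : (p - 1) / p * (a' x * |u' x| ^ p + a x * (p / (p - 1) * u' x * v' x)) +
      φ (u x) * u' x = h x (u x) (u' x) * u' x - dA n p a a' x * |u' x| ^ p := by
    have h7 : h x (u x) (u' x) * u' x = a' x * |u' x| ^ p + a x * v' x * u' x +
        (n - 1) * (a x / x) * |u' x| ^ p + φ (u x) * u' x := by
      rw [← hX]
      have : h x (u x) (u' x) = w' x + (n - 1) * (a x / x) * PhiP p (u' x) + φ (u x) := by
        linarith
      rw [this, hw']; ring
    rw [h7, dA]
    field_simp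
    ring
  rw [e]
  calc _ ≤ _ := sub_le_sub_right h5 _
    _ = _ := by ring

lemma J_small {f : ℝ → ℝ≥0∞} {x T : ℝ} (hxT : x < T) (hf : ∫⁻ t in Ioc x T, f t ≠ ⊤) :
    ∀ᶠ r in 𝓝[>] x, ∫⁻ t in Ioc x r, f t ≤ 1 := by
  have ht : Tendsto ((volume.restrict (Ioc x T)) ∘ (fun r => Ioc x r)) (𝓝[>] x) (𝓝 0) := by
    have h0 : Tendsto (fun r => ENNReal.ofReal (r - x)) (𝓝[>] x) (𝓝 0) := by
      have : Tendsto (fun r => ENNReal.ofReal (r - x)) (𝓝 x) (𝓝 (ENNReal.ofReal (x - x))) :=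
        (ENNReal.continuous_ofReal.comp (continuous_id.sub continuous_const)).tendsto x
      rw [sub_self, ENNReal.ofReal_zero] at this
      exact this.mono_left nhdsWithin_le_nhds
    refine tendsto_of_tendsto_of_tendsto_of_le_of_le tendsto_const_nhds h0
      (fun _ => zero_le) (fun r => ?_)
    refine (Measure.restrict_apply_le _ _).trans ?_
    rw [Real.volume_Ioc]
  have h1 := (tendsto_setLIntegral_zero hf ht).eventually (Iic_mem_nhds one_pos)
  filter_upwards [h1, Ioc_mem_nhdsGT hxT] with r hr hrT
  rw [Measure.restrict_restrict measurableSet_Ioc,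
    inter_eq_left.2 (Ioc_subset_Ioc_right hrT.2)] at hr
  exact hr

lemma a_nonneg {a : ℝ → ℝ} {s x : ℝ} (hsx : s < x) (hc : ContinuousOn a (Icc s x))
    (hpos : ∀ᵐ τ, τ ∈ Icc s x → 0 < a τ) : 0 ≤ a x := by
  by_contra hneg
  push Not at hneg
  have h1 : ContinuousWithinAt a (Icc s x) x := hc x ⟨hsx.le, le_rfl⟩
  have h2 : ∀ᶠ y in 𝓝[Icc s x] x, a y < 0 := h1.eventually (Iio_mem_nhds hneg)
  have h3 : ∀ᶠ y in 𝓝[<] x, a y < 0 := by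
    refine h2.filter_mono ?_
    rw [← nhdsWithin_Ioo_eq_nhdsLT hsx]
    exact nhdsWithin_mono _ Ioo_subset_Icc_self
  have h4 : ∀ᶠ y in 𝓝[<] x, s < y ∧ a y < 0 := by
    filter_upwards [h3, Ioo_mem_nhdsLT hsx] with y hy hy' using ⟨hy'.1, hy⟩
  obtain ⟨c, hc, hcs⟩ := (mem_nhdsLT_iff_exists_Ioo_subset).1 h4
  have hne : volume (Ioo c x) ≠ 0 := by
    rw [Real.volume_Ioo]
    simpa using hc
  have := ae_restrict_neBot.2 hne
  have h5 : ∀ᵐ τ ∂(volume.restrict (Ioo c x)), τ ∈ Ioo c x ∧ 0 < a τ := by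
    rw [ae_restrict_iff' measurableSet_Ioo]
    filter_upwards [hpos] with τ h hτ
    exact ⟨hτ, h ⟨(hcs hτ).1.le, hτ.2.le⟩⟩
  obtain ⟨τ, hτ, hτ'⟩ := h5.exists
  have := (hcs hτ).2
  linarith

/-- **Support of the solution (divergent form)**. -/
theorem support_divergent
    (p l n : ℝ) (R : ℝ≥0∞)
    (hp : 1 < p) (hl0 : 0 < l) (hlp : l < p) (hn : 1 ≤ n) (hR : 0 < R)
    (φ : ℝ → ℝ) (hφcont : Continuous φ) (hφodd : ∀ t : ℝ, φ (-t) = -φ t)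
    (hφsign : ∀ᵐ τ ∂(volume : Measure ℝ), 0 < τ * φ τ)
    (a a' : ℝ → ℝ)
    (haAC : ∀ s r : ℝ, 0 < s → s ≤ r → ENNReal.ofReal r < R → ACOn a a' s r)
    (q : ℝ → ℝ) (hqmeas : Measurable q)
    (hapos : ∀ᵐ τ ∂(volume.restrict {τ : ℝ | 0 < τ ∧ ENNReal.ofReal τ < R}), 0 < a τ)
    (hvpos : ∀ᵐ τ ∂(volume.restrict {τ : ℝ | 0 < τ ∧ ENNReal.ofReal τ < R}), 0 < dA n p a a' τ)
    (hvint : ∀ s r : ℝ, 0 < s → s ≤ r → ENNReal.ofReal r < R →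
      IntegrableOn (dA n p a a') (Set.Icc s r) ∧
        IntegrableOn (fun τ => dA n p a a' τ ^ (-(1 / (p - 1)))) (Set.Icc s r))
    (hqint : ∀ s r : ℝ, 0 < s → s ≤ r → ENNReal.ofReal r < R → IntegrableOn q (Set.Icc s r))
    (h : ℝ → ℝ → ℝ → ℝ)
    (hhmeas : ∀ lam₀ lam₁ : ℝ, Measurable fun τ => h τ lam₀ lam₁)
    (hhcont : ∀ τ : ℝ, Continuous fun z : ℝ × ℝ => h τ z.1 z.2)
    (θ : ℝ) (hθ0 : 0 < θ) (hθ1 : θ ≤ 1)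
    (hq0 : ∀ᵐ τ ∂(volume.restrict {τ : ℝ | 0 < τ ∧ ENNReal.ofReal τ < R}), 0 ≤ q τ)
    (hgrowth : ∀ᵐ τ ∂(volume.restrict {τ : ℝ | 0 < τ ∧ ENNReal.ofReal τ < R}),
      ∀ lam₀ lam₁ : ℝ, h τ lam₀ lam₁ * lam₁ ≤
        θ * q τ * |lam₀| ^ l * |lam₁| ^ (p - l) + (1 - θ) * dA n p a a' τ * |lam₁| ^ p)
    (hK : ∀ s r : ℝ, 0 < s → s < r → ENNReal.ofReal r < R →
      BDK p l q (dA n p a a') s (Set.Ioc s r) < ⊤)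
    (u u' v' w' : ℝ → ℝ)
    (huAC : ∀ s r : ℝ, 0 < s → s ≤ r → ENNReal.ofReal r < R → ACOn u u' s r)
    (hvAC : ∀ s r : ℝ, 0 < s → s ≤ r → ENNReal.ofReal r < R →
      ACOn (fun τ => PhiP p (u' τ)) v' s r)
    (hwAC : ∀ s r : ℝ, 0 < s → s ≤ r → ENNReal.ofReal r < R →
      ACOn (fun τ => a τ * PhiP p (u' τ)) w' s r)
    (hODE : ∀ᵐ τ ∂(volume.restrict {τ : ℝ | 0 < τ ∧ ENNReal.ofReal τ < R}),
      w' τ + (n - 1) * (a τ / τ) * PhiP p (u' τ)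
        - h τ (u τ) (u' τ) + φ (u τ) = 0) :
    ∀ s : ℝ, 0 < s → ENNReal.ofReal s < R → u s = 0 → u' s = 0 →
      ∀ τ : ℝ, s ≤ τ → ENNReal.ofReal τ < R → u τ = 0 := by
  intro s hs0 hsR hus hu's T hsT hTR
  have hmono : ∀ {x y : ℝ}, x ≤ y → ENNReal.ofReal y < R → ENNReal.ofReal x < R :=
    fun hxy hy => (ENNReal.ofReal_le_ofReal hxy).trans_lt hy
  have hM : MeasurableSet {τ : ℝ | 0 < τ ∧ ENNReal.ofReal τ < R} :=
    measurableSet_Ioi.inter (measurableSet_lt ENNReal.measurable_ofReal measurable_const)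
  have tr : ∀ {P : ℝ → Prop},
      (∀ᵐ τ ∂(volume.restrict {τ : ℝ | 0 < τ ∧ ENNReal.ofReal τ < R}), P τ) →
      ∀ {x r : ℝ}, 0 < x → ENNReal.ofReal r < R → ∀ᵐ τ, τ ∈ Icc x r → P τ := by
    intro P hP x r hx hr
    rw [ae_restrict_iff' hM] at hP
    filter_upwards [hP] with τ h hτ
    exact h ⟨hx.trans_le hτ.1, hmono hτ.2 hr⟩
  have ha0 : ∀ x : ℝ, 0 < x → ENNReal.ofReal x < R → 0 ≤ a x := by
    intro x hx hxR
    have hlt : x / 2 < x := by linarith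
    have hc := ((haAC (x / 2) x (by linarith) hlt.le hxR).ac hlt.le).continuousOn
    rw [uIcc_of_le hlt.le] at hc
    exact a_nonneg hlt hc (tr hapos (by linarith) hxR)
  set E := EnergyD p φ a u u' with hEdef
  have hPsi0 : ∀ y : ℝ, 0 ≤ ∫ t in (0:ℝ)..y, φ t := by
    intro y
    by_cases hy : y = 0
    · simp [hy]
    · exact (Psi_pos hφcont hφsign hy).le
  have hkin : ∀ x : ℝ, 0 < x → ENNReal.ofReal x < R →
      0 ≤ (p - 1) / p * (a x * |PhiP p (u' x)| ^ (p / (p - 1))) := by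
    intro x hx hxR
    have := ha0 x hx hxR
    have : 0 ≤ (p - 1) / p := div_nonneg (by linarith) (by linarith)
    positivity
  have hEnn : ∀ x : ℝ, 0 < x → ENNReal.ofReal x < R → 0 ≤ E x := fun x hx hxR =>
    add_nonneg (hkin x hx hxR) (hPsi0 _)
  have hEu : ∀ x : ℝ, 0 < x → ENNReal.ofReal x < R → E x = 0 → u x = 0 := by
    intro x hx hxR h0
    by_contra hne
    have h1 := Psi_pos hφcont hφsign hne
    have h2 := hkin x hx hxR
    have : E x = (p - 1) / p * (a x * |PhiP p (u' x)| ^ (p / (p - 1))) +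
      ∫ t in (0:ℝ)..(u x), φ t := rfl
    linarith
  have hEs : E s = 0 := by
    have : p / (p - 1) ≠ 0 := by have := conj_gt hp; linarith
    simp [hEdef, EnergyD, hus, hu's, PhiP, Real.zero_rpow this]
  have hEac : ∀ x r : ℝ, 0 < x → x ≤ r → ENNReal.ofReal r < R →
      AbsolutelyContinuousOnInterval E x r := fun x r hx hxr hr =>
    energy_ac hp hxr hφcont (haAC x r hx hxr hr) (huAC x r hx hxr hr) (hvAC x r hx hxr hr)
  have hsub : Icc s T ⊆ {x | E x = 0} := by
    apply IsClosed.Icc_subset_of_forall_mem_nhdsWithin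
    · have hc := (hEac s T hs0 hsT hTR).continuousOn
      rw [uIcc_of_le hsT] at hc
      have := hc.preimage_isClosed_of_isClosed isClosed_Icc (isClosed_singleton (x := (0:ℝ)))
      rw [inter_comm]
      exact this
    · exact hEs
    · rintro x ⟨hx0, hxs, hxT⟩
      have hx : 0 < x := hs0.trans_le hxs
      have hux : u x = 0 := hEu x hx (hmono hxT.le hTR) hx0
      have hJ : ∫⁻ t in Ioc x T, ENNReal.ofReal (q t) ^ (p / l) *
          ENNReal.ofReal (dA n p a a' t) ^ (-((p - l) / l)) *
          (∫⁻ σ in Ioc x t, ENNReal.ofReal (dA n p a a' σ) ^ (-(1 / (p - 1)))) ^ (p - 1) ≠ ⊤ := by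
        intro htop
        have h1 := hK x T hx hxT hTR
        rw [BDK, htop, ENNReal.top_rpow_of_pos (by positivity), ENNReal.mul_top] at h1
        · exact lt_irrefl _ h1
        · have : 0 < (p - l) / p := div_pos (by linarith) (by linarith)
          have := Real.rpow_pos_of_pos this ((p - l) / p)
          simpa using this
      filter_upwards [J_small hxT hJ, Ioc_mem_nhdsGT hxT] with r hr hrT
      have hrR := hmono hrT.2 hTR
      have hxr := hrT.1
      have hr0 : 0 < r := hx.trans hxr
      have hcv := ((hvAC x r hx hxr.le hrR).ac hxr.le).continuousOn
      rw [uIcc_of_le hxr.le] at hcv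
      have hstep := local_step hp hl0 hlp hθ0 hxr (hEac x r hx hxr.le hrR)
        (energy_deriv hp hxr.le hφcont (haAC x r hx hxr.le hrR) (huAC x r hx hxr.le hrR)
          (hvAC x r hx hxr.le hrR) (hwAC x r hx hxr.le hrR) (tr hgrowth hx hrR)
          (tr hODE hx hrR))
        (huAC x r hx hxr.le hrR) hux (cont_of_PhiP hp hcv) (hqint x r hx hxr.le hrR)
        (hvint x r hx hxr.le hrR).1 (tr hq0 hx hrR) (tr hvpos hx hrR) hr
      have hx0' : E x = 0 := hx0
      have := hEnn r hr0 hrR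
      show E r = 0
      linarith
  exact hEu T (hs0.trans_le hsT) hTR (hsub ⟨hsT, le_rfl⟩)
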